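/- arXiv:2509.09274 — 3 statements merged into one kernel-verified Lean document; each statement's English description precedes it below -/
import Mathlib

section
/- Let (Ω, F, ℙ) be a probability space and let (Z_k)_{k≥0} be a sequence of ℝ^d-valued random variables such that E[|Z_k|^{2p}] < ∞ for every k ≥ 0 and every integer p ≥ 1. Suppose there are constants m, n > 0 and h > 0 with 1 − mh > 0 such that for every integer p ≥ 1 and every k ≥ 1: E[|Z_k|^{2p}] ≤ (1 − mh)·E[|Z_{k−1}|^{2p}] + nh·E[|Z_{k−1}|^{2p−2}]. Then for every integer p ≥ 1 there exists a constant C₁₂ > 0 depending only on p, m and n (in particular independent of h and k) such that for all k ≥ 0: E[|Z_k|^{2p}] ≤ C₁₂·E[1 + |Z₀|^{2p}]. -/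
open MeasureTheory

/-!
Write `a_q(k) = E|Z_k|^{2q}`. The bound is proved by induction on `q`, starting from `q = 0`,
where `a_0(k) = 1`. If `a_q(k) ≤ S` for all `k`, then the recursion reads
`a_{q+1}(k) ≤ (1 - mh) a_{q+1}(k-1) + mh (n/m) S`, so by convexity every upper bound of both
`a_{q+1}(0)` and `(n/m) S` is preserved in `k` (`affine_recursion_bound`). By the induction
hypothesis `S = C_q E[1 + |Z_0|^{2q}] ≤ 2 C_q E[1 + |Z_0|^{2q+2}]`, hence
`C_{q+1} = 1 + 2 (n/m) C_q` works; it does not involve `h` or `k`.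
-/

/-- A level `B` lying above the fixed point `n S / m` of the affine recursion and above the
initial value is never exceeded. -/
lemma affine_recursion_bound {m n h S B : ℝ} (hh : 0 < h) (hmh : 0 < 1 - m * h)
    {a : ℕ → ℝ} (ha0 : a 0 ≤ B) (hS : n * S ≤ m * B)
    (hrec : ∀ k, a (k + 1) ≤ (1 - m * h) * a k + n * h * S) (k : ℕ) : a k ≤ B := by
  induction k with
  | zero => exact ha0
  | succ k ih =>
    have h1 := hrec k
    have h2 := mul_le_mul_of_nonneg_left ih hmh.le
    have h3 := mul_le_mul_of_nonneg_left hS hh.le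
    linarith

lemma one_add_pow_le (x : ℝ) (hx : 0 ≤ x) (q : ℕ) :
    1 + x ^ (2 * q) ≤ 2 * (1 + x ^ (2 * (q + 1))) := by
  have h0 : 0 ≤ x ^ (2 * (q + 1)) := pow_nonneg hx _
  rcases le_total x 1 with h | h
  · have := pow_le_one₀ (n := 2 * q) hx h
    linarith
  · have := pow_le_pow_right₀ h (show 2 * q ≤ 2 * (q + 1) by omega)
    linarith

/-- The moment bound for all exponents, including the trivial exponent `0` from which the
induction starts. -/
lemma moment_bound_all (m n : ℝ) (hm : 0 < m) (hn : 0 < n) (p : ℕ) :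
    ∃ C > (0:ℝ),
      ∀ (d : ℕ) (Ω : Type) (mΩ : MeasurableSpace Ω) (ℙ : Measure Ω),
        IsProbabilityMeasure ℙ →
        ∀ (Z : ℕ → Ω → EuclideanSpace ℝ (Fin d)) (h : ℝ), 0 < h → 0 < 1 - m * h →
        (∀ k q, 1 ≤ q → Integrable (fun ω => ‖Z k ω‖ ^ (2 * q)) ℙ) →
        (∀ q, 1 ≤ q → ∀ k, 1 ≤ k →
          ∫ ω, ‖Z k ω‖ ^ (2 * q) ∂ℙ ≤
            (1 - m * h) * ∫ ω, ‖Z (k - 1) ω‖ ^ (2 * q) ∂ℙ +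
              n * h * ∫ ω, ‖Z (k - 1) ω‖ ^ (2 * q - 2) ∂ℙ) →
        ∀ k, ∫ ω, ‖Z k ω‖ ^ (2 * p) ∂ℙ ≤ C * ∫ ω, (1 + ‖Z 0 ω‖ ^ (2 * p)) ∂ℙ := by
  induction p with
  | zero =>
    refine ⟨1, one_pos, ?_⟩
    intro d Ω mΩ ℙ hP Z h hh hmh hint hrec k
    simp
  | succ q ih =>
    obtain ⟨C, hC, H⟩ := ih
    refine ⟨1 + 2 * (n / m) * C, by positivity, ?_⟩
    intro d Ω mΩ ℙ hP Z h hh hmh hint hrec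
    have hq := H d Ω mΩ ℙ hP Z h hh hmh hint hrec
    have hint0 : ∀ r, Integrable (fun ω => 1 + ‖Z 0 ω‖ ^ (2 * r)) ℙ := by
      intro r
      rcases Nat.eq_zero_or_pos r with rfl | hr
      · simp
      · exact (integrable_const 1).add (hint 0 r hr)
    set I := ∫ ω, (1 + ‖Z 0 ω‖ ^ (2 * q)) ∂ℙ
    set J := ∫ ω, (1 + ‖Z 0 ω‖ ^ (2 * (q + 1))) ∂ℙ with hJ
    have hIJ : I ≤ 2 * J := by
      rw [hJ, ← integral_const_mul]
      exact integral_mono (hint0 q) ((hint0 (q + 1)).const_mul 2)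
        fun ω => one_add_pow_le _ (norm_nonneg _) q
    have h0J : ∫ ω, ‖Z 0 ω‖ ^ (2 * (q + 1)) ∂ℙ ≤ J :=
      integral_mono (hint 0 (q + 1) (by omega)) (hint0 (q + 1)) fun ω => by simp
    have hJ0 : 0 ≤ J := integral_nonneg fun ω => by positivity
    refine affine_recursion_bound (a := fun k => ∫ ω, ‖Z k ω‖ ^ (2 * (q + 1)) ∂ℙ)
      (n := n) (S := C * I) hh hmh ?_ ?_ ?_
    · have : 0 ≤ 2 * (n / m) * C * J := by positivity
      linarith
    · have e : m * ((1 + 2 * (n / m) * C) * J) = m * J + n * C * (2 * J) := by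
        field_simp
      have h1 := mul_le_mul_of_nonneg_left hIJ (mul_pos hn hC).le
      have h2 := mul_nonneg hm.le hJ0
      rw [e]
      linarith
    · intro k
      have h1 := hrec (q + 1) (by omega) (k + 1) (by omega)
      have e : 2 * (q + 1) - 2 = 2 * q := by omega
      rw [e, Nat.add_sub_cancel] at h1
      have h2 := mul_le_mul_of_nonneg_left (hq k) (mul_pos hn hh).le
      exact h1.trans (by linarith)

/-- Lemma 5.2: if the `2p`-th moments of a sequence of random variables satisfy the
recursion `E|Z_k|^{2p} ≤ (1-mh) E|Z_{k-1}|^{2p} + nh E|Z_{k-1}|^{2p-2}`, then they are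
bounded by `C₁₂ E[1+|Z₀|^{2p}]` with `C₁₂` depending only on `p, m, n`. -/
theorem moment_recursion_bound (m n : ℝ) (hm : 0 < m) (hn : 0 < n)
    (p : ℕ) (hp : 1 ≤ p) :
    ∃ C > (0:ℝ),
      ∀ (d : ℕ) (Ω : Type) (mΩ : MeasurableSpace Ω) (ℙ : Measure Ω),
        IsProbabilityMeasure ℙ →
        ∀ (Z : ℕ → Ω → EuclideanSpace ℝ (Fin d)) (h : ℝ), 0 < h → 0 < 1 - m * h →
        (∀ k q, 1 ≤ q → Integrable (fun ω => ‖Z k ω‖ ^ (2 * q)) ℙ) →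
        (∀ q, 1 ≤ q → ∀ k, 1 ≤ k →
          ∫ ω, ‖Z k ω‖ ^ (2 * q) ∂ℙ ≤
            (1 - m * h) * ∫ ω, ‖Z (k - 1) ω‖ ^ (2 * q) ∂ℙ +
              n * h * ∫ ω, ‖Z (k - 1) ω‖ ^ (2 * q - 2) ∂ℙ) →
        ∀ k, ∫ ω, ‖Z k ω‖ ^ (2 * p) ∂ℙ ≤ C * ∫ ω, (1 + ‖Z 0 ω‖ ^ (2 * p)) ∂ℙ := by
  obtain ⟨C, hC, H⟩ := moment_bound_all m n hm hn p
  exact ⟨C, hC, fun d Ω mΩ ℙ hP Z h hh hmh hint hrec k =>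
    H d Ω mΩ ℙ hP Z h hh hmh hint hrec k⟩
end

section
/- Define b : ℝ × P₂(ℝ) → ℝ by b(x,μ) = 5x(−2 − |x|) + (1/4)∫_ℝ |u| dμ(u) and σ : ℝ × P₂(ℝ) → ℝ by σ(x,μ) = x/8. Then for all x, y ∈ ℝ and all μ, ν ∈ P₂(ℝ): 2(x−y)(b(x,μ) − b(y,ν)) + |σ(x,μ) − σ(y,ν)|² ≤ −(303/16)|x−y|² + W₂(μ,ν)². -/
/-!
The linear part of the drift contributes `-20 (x - y)²`, its superlinear part `-5 x |x|` is
nonincreasing and contributes a nonpositive term, and the diffusion contributes `(x - y)² / 64`.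
The mean-field term is `(x - y) (m - n) / 2`, where `m` and `n` are the first absolute moments of
`μ` and `ν`; by Young's inequality it is at most `(x - y)² / 16 + (m - n)²`. Finally
`|m - n| ≤ W₂(μ, ν)` (`abs_moment_sub_le_wasserstein2`), and `-20 + 1/64 + 1/16 ≤ -303/16`.
-/

open MeasureTheory
open scoped ENNReal NNReal

noncomputable section

abbrev Euc (d : ℕ) := EuclideanSpace ℝ (Fin d)

/-- A coupling of two measures. -/
def IsCoupling {α : Type*} [MeasurableSpace α] (π : Measure (α × α)) (μ ν : Measure α) : Prop :=
  π.map Prod.fst = μ ∧ π.map Prod.snd = ν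

/-- The L²-Wasserstein distance between two measures. -/
def wasserstein2 {α : Type*} [MeasurableSpace α] [NormedAddCommGroup α]
    (μ ν : Measure α) : ℝ :=
  sInf { r : ℝ | ∃ π : Measure (α × α), IsProbabilityMeasure π ∧ IsCoupling π μ ν ∧
    r = (∫ q, ‖q.1 - q.2‖ ^ 2 ∂π) ^ (1/2 : ℝ) }

/-- The second-moment functional `W₂(μ) = (∫ ‖x‖² dμ)^{1/2}`. -/
def secondMomentRoot {α : Type*} [MeasurableSpace α] [NormedAddCommGroup α]
    (μ : Measure α) : ℝ :=
  (∫ x, ‖x‖ ^ 2 ∂μ) ^ (1/2 : ℝ)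

/-- Membership in `P₂`: probability measure with finite second moment. -/
def MemP2 {α : Type*} [MeasurableSpace α] [NormedAddCommGroup α] (μ : Measure α) : Prop :=
  IsProbabilityMeasure μ ∧ Integrable (fun x => ‖x‖ ^ 2) μ

/-- The empirical measure `(1/N) ∑ δ_{x i}`. -/
def empMeas {α : Type*} [MeasurableSpace α] {N : ℕ} (x : Fin N → α) : Measure α :=
  (N : ℝ≥0∞)⁻¹ • ∑ i, Measure.dirac (x i)

/-- The Hilbert–Schmidt (Frobenius) norm of a real matrix. -/
def frobNorm {d m : ℕ} (A : Matrix (Fin d) (Fin m) ℝ) : ℝ :=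
  Real.sqrt (∑ i, ∑ j, (A i j) ^ 2)

/-- The projection operator `ψ(x) = min{1, h^{-1/(2(κ+2))} |x|⁻¹} x`. -/
def projOp (d : ℕ) (h κ : ℝ) (x : Euc d) : Euc d :=
  min 1 (h ^ (-(1 : ℝ) / (2 * (κ + 2))) * ‖x‖⁻¹) • x

/-- Matrix–vector multiplication landing in Euclidean space. -/
def mulVecE {d m : ℕ} (A : Matrix (Fin d) (Fin m) ℝ) (w : Euc m) : Euc d :=
  (WithLp.equiv 2 (Fin d → ℝ)).symm (A.mulVec ((WithLp.equiv 2 (Fin m → ℝ)) w))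


/-- Example 4.1 drift. -/
def bEx1 (x : ℝ) (μ : Measure ℝ) : ℝ := 5 * x * (-2 - |x|) + (1 / 4) * ∫ u, |u| ∂μ

/-- Example 4.1 diffusion. -/
def σEx1 (x : ℝ) (_μ : Measure ℝ) : ℝ := x / 8

/-- First absolute moments are `1`-Lipschitz for the transport cost of any coupling: the triangle
inequality gives `|∫ |u| dμ - ∫ |u| dν| ≤ ∫ |q₁ - q₂| dπ`, and Jensen bounds the square of the
right-hand side by `∫ |q₁ - q₂|² dπ`. -/
lemma sq_abs_moment_sub_le_of_coupling {μ ν : Measure ℝ} (hμ : MemP2 μ) (hν : MemP2 ν)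
    {π : Measure (ℝ × ℝ)} [IsProbabilityMeasure π] (hπ : IsCoupling π μ ν) :
    ((∫ u, |u| ∂μ) - ∫ u, |u| ∂ν) ^ 2 ≤ ∫ q, ‖q.1 - q.2‖ ^ 2 ∂π := by
  obtain ⟨rfl, rfl⟩ := hπ
  have h1 : MemLp (fun q : ℝ × ℝ => q.1) 2 π := by
    rw [memLp_two_iff_integrable_sq_norm (by fun_prop)]
    exact hμ.2.comp_measurable measurable_fst
  have h2 : MemLp (fun q : ℝ × ℝ => q.2) 2 π := by
    rw [memLp_two_iff_integrable_sq_norm (by fun_prop)]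
    exact hν.2.comp_measurable measurable_snd
  have i1 := (h1.integrable one_le_two).abs
  have i2 := (h2.integrable one_le_two).abs
  rw [integral_map (by fun_prop) (by fun_prop), integral_map (by fun_prop) (by fun_prop),
    ← integral_sub i1 i2]
  have hd : MemLp (fun q : ℝ × ℝ => |q.1| - |q.2|) 2 π := h1.norm.sub h2.norm
  have hsub : MemLp (fun q : ℝ × ℝ => q.1 - q.2) 2 π := h1.sub h2
  -- nonnegativity of the variance is the quadratic case of Jensen
  have hvar := ProbabilityTheory.variance_nonneg (fun q : ℝ × ℝ => |q.1| - |q.2|) π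
  rw [ProbabilityTheory.variance_eq_sub hd] at hvar
  refine (sub_nonneg.mp hvar).trans (integral_mono hd.integrable_sq ?_ fun q => ?_)
  · exact (memLp_two_iff_integrable_sq_norm hsub.1).mp hsub
  · simpa [Real.norm_eq_abs] using sq_le_sq.mpr (abs_abs_sub_abs_le_abs_sub q.1 q.2)

lemma abs_moment_sub_le_wasserstein2 {μ ν : Measure ℝ} (hμ : MemP2 μ) (hν : MemP2 ν) :
    |(∫ u, |u| ∂μ) - ∫ u, |u| ∂ν| ≤ wasserstein2 μ ν := by
  have := hμ.1
  have := hν.1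
  -- the product coupling shows that the infimum is over a nonempty set
  refine le_csInf ⟨_, μ.prod ν, inferInstance, ⟨?_, ?_⟩, rfl⟩ ?_
  · simp
  · simp
  · rintro r ⟨π, hπ, hc, rfl⟩
    rw [← Real.sqrt_eq_rpow]
    exact Real.abs_le_sqrt (sq_abs_moment_sub_le_of_coupling hμ hν hc)

/-- The map `t ↦ t |t|` is nondecreasing, in the form used for the superlinear drift. -/
lemma mul_abs_monotone_aux (x y : ℝ) : 0 ≤ (x - y) * (x * |x| - y * |y|) := by
  rcases abs_cases x with ⟨hx, hx'⟩ | ⟨hx, hx'⟩ <;>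
    rcases abs_cases y with ⟨hy, hy'⟩ | ⟨hy, hy'⟩ <;> rw [hx, hy]
  · nlinarith [mul_nonneg (sq_nonneg (x - y)) (add_nonneg hx' hy')]
  · exact mul_nonneg (by linarith) (by nlinarith)
  · exact mul_nonneg_of_nonpos_of_nonpos (by linarith) (by nlinarith)
  · nlinarith [mul_nonneg (sq_nonneg (x - y)) (by linarith : 0 ≤ -(x + y))]

/-- Verification of Assumption 2.1 for Example 4.1 with `K₁ = 303/16`, `K₂ = 1`. -/
theorem example1_contractive_monotonicity :
    ∀ (x y : ℝ) (μ ν : Measure ℝ), MemP2 μ → MemP2 ν →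
      2 * (x - y) * (bEx1 x μ - bEx1 y ν) + |σEx1 x μ - σEx1 y ν| ^ 2 ≤
        -(303 / 16) * |x - y| ^ 2 + wasserstein2 μ ν ^ 2 := by
  intro x y μ ν hμ hν
  have hW := sq_le_sq' (abs_le.mp (abs_moment_sub_le_wasserstein2 hμ hν)).1
    (abs_le.mp (abs_moment_sub_le_wasserstein2 hμ hν)).2
  have hm := mul_abs_monotone_aux x y
  simp only [bEx1, σEx1, sq_abs]
  set m := ∫ u, |u| ∂μ
  set n := ∫ u, |u| ∂ν
  -- Young's inequality `(x - y) (m - n) / 2 ≤ (x - y)² / 16 + (m - n)²`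
  nlinarith [sq_nonneg ((x - y) / 4 - (m - n)), sq_nonneg (x - y)]
end
end

section
/- Let p ≥ 1 be an integer, let a₁ > a₂ ≥ 0 be real numbers, and let h be a real number with 0 < h ≤ 1/(p(a₁ − a₂)). Then the quantity γ₂ := (1 + a₁h)^{−p} · ∑_{l=1}^{p} binom(p,l) · h^{l−1} · [ a₁^l − a₂^l · ( 1 + ((p−l)/p) · ∑_{r=1}^{p} binom(2p,2r) · (2r−1)!! · 4^r · ((a₁−a₂)/(5(4p−1)))^r · h^r ) ] − (1 + a₁h)^{−p} · ∑_{r=1}^{p} binom(2p,2r) · (2r−1)!! · 4^r · ((a₁−a₂)/(5(4p−1)))^r · h^{r−1} is strictly positive: γ₂ > 0. -/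
/-!
Put `A = a₁ h`, `B = a₂ h`, `x = A - B ∈ (0, 1/p]`, and let `S` be the inner sum over `r`. Since
`binom(p,l) (p-l)/p = binom(p-1,l)`, the binomial theorem gives

  `h (1 + A)^p γ₂ = (1 + A)^p - (1 + B)^p - S (1 + B)^(p-1)`.

Bernoulli's inequality yields `(1 + A)^p - (1 + B)^p ≥ p x (1 + B)^(p-1)`, so it suffices that
`S < p x` (`inner_sum_lt`). The `r`-th term of `S` is at most `p x / 2^r` (`inner_term_le`): this
holds for `r = 1`, and consecutive terms have ratio at most
`(2p)² · 4x / (5 (4p-1) (2r+2)) ≤ 1/2` because `p x ≤ 1`.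
-/

/-- Falling-factorial bound for two consecutive steps of `binom(n, 2r) (2r-1)!!`; the factor
`2r + 1` of the double factorial cancels one of the two denominators of the binomial ratio. -/
lemma choose_mul_doubleFactorial_step (n r : ℕ) (hr : 1 ≤ r) :
    n.choose (2 * (r + 1)) * Nat.doubleFactorial (2 * (r + 1) - 1) * (2 * r + 2) ≤
      n.choose (2 * r) * Nat.doubleFactorial (2 * r - 1) * n ^ 2 := by
  have h1 := Nat.choose_succ_right_eq n (2 * r)
  have h2 := Nat.choose_succ_right_eq n (2 * r + 1)
  have hdf : Nat.doubleFactorial (2 * (r + 1) - 1) =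
      (2 * r + 1) * Nat.doubleFactorial (2 * r - 1) := by
    obtain ⟨k, rfl⟩ : ∃ k, r = k + 1 := ⟨r - 1, by omega⟩
    exact Nat.doubleFactorial_add_two (2 * k + 1)
  rw [hdf]
  calc n.choose (2 * (r + 1)) * ((2 * r + 1) * Nat.doubleFactorial (2 * r - 1)) * (2 * r + 2)
      = (n.choose (2 * r + 1 + 1) * (2 * r + 1 + 1)) * (2 * r + 1)
          * Nat.doubleFactorial (2 * r - 1) := by
        rw [show 2 * (r + 1) = 2 * r + 1 + 1 by ring]; ring
    _ = (n.choose (2 * r + 1) * (2 * r + 1)) * (n - (2 * r + 1))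
          * Nat.doubleFactorial (2 * r - 1) := by rw [h2]; ring
    _ = n.choose (2 * r) * Nat.doubleFactorial (2 * r - 1) * ((n - 2 * r) * (n - (2 * r + 1))) := by
        rw [h1]; ring
    _ ≤ n.choose (2 * r) * Nat.doubleFactorial (2 * r - 1) * n ^ 2 := by
        rw [pow_two]
        gcongr <;> omega

lemma inner_term_le (p : ℕ) (hp : 1 ≤ p) (x : ℝ) (hx : 0 < x) (hpx : p * x ≤ 1)
    (r : ℕ) (hr : 1 ≤ r) :
    ((2 * p).choose (2 * r) : ℝ) * (Nat.doubleFactorial (2 * r - 1) : ℝ) *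
      (4 * x / (5 * (4 * (p : ℝ) - 1))) ^ r ≤ p * x * (1 / 2) ^ r := by
  have hp' : (1 : ℝ) ≤ p := by exact_mod_cast hp
  have hden : 0 < 5 * (4 * (p : ℝ) - 1) := by linarith
  set y := 4 * x / (5 * (4 * (p : ℝ) - 1)) with hy
  have hy0 : 0 < y := by positivity
  induction r, hr using Nat.le_induction with
  | base =>
    have hc : ((2 * p).choose (2 * 1) : ℝ) = p * (2 * p - 1) := by
      rw [mul_one, Nat.cast_choose_two]; push_cast; ring
    have hxy : (2 * (p : ℝ) - 1) * y ≤ x * (1 / 2) := by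
      rw [hy, mul_div_assoc', div_le_iff₀ hden]
      nlinarith
    rw [hc]
    norm_num
    nlinarith
  | succ r hr ih =>
    have hr' : (1 : ℝ) ≤ r := by exact_mod_cast hr
    have hstep : ((2 * p).choose (2 * (r + 1)) : ℝ) *
        (Nat.doubleFactorial (2 * (r + 1) - 1) : ℝ) * (2 * r + 2) ≤
        ((2 * p).choose (2 * r) : ℝ) * (Nat.doubleFactorial (2 * r - 1) : ℝ) * (2 * p) ^ 2 := by
      exact_mod_cast choose_mul_doubleFactorial_step (2 * p) r hr
    have hratio : (2 * (p : ℝ)) ^ 2 * y ≤ 2 := by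
      rw [hy, mul_div_assoc', div_le_iff₀ hden]
      nlinarith
    set C := ((2 * p).choose (2 * r) : ℝ) * (Nat.doubleFactorial (2 * r - 1) : ℝ)
    set D := ((2 * p).choose (2 * (r + 1)) : ℝ) * (Nat.doubleFactorial (2 * (r + 1) - 1) : ℝ)
    have hD : 0 ≤ D := by positivity
    have hC : 0 ≤ C := by positivity
    have h4 : D * 4 ≤ C * (2 * p) ^ 2 := by nlinarith
    have hDy : D * y ≤ C * (1 / 2) := by nlinarith
    calc D * y ^ (r + 1) = (D * y) * y ^ r := by ring
      _ ≤ (C * (1 / 2)) * y ^ r := by gcongr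
      _ = (C * y ^ r) * (1 / 2) := by ring
      _ ≤ (p * x * (1 / 2) ^ r) * (1 / 2) := by gcongr
      _ = p * x * (1 / 2) ^ (r + 1) := by ring

lemma sum_half_pow (p : ℕ) : ∑ r ∈ Finset.Icc 1 p, (1 / 2 : ℝ) ^ r = 1 - (1 / 2) ^ p := by
  induction p with
  | zero => simp
  | succ n ih => rw [Finset.sum_Icc_succ_top (by omega), ih]; ring

lemma inner_sum_lt (p : ℕ) (hp : 1 ≤ p) (x : ℝ) (hx : 0 < x) (hpx : p * x ≤ 1) :
    ∑ r ∈ Finset.Icc 1 p, ((2 * p).choose (2 * r) : ℝ) *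
      (Nat.doubleFactorial (2 * r - 1) : ℝ) *
      (4 * x / (5 * (4 * (p : ℝ) - 1))) ^ r < p * x := by
  have hp' : (0 : ℝ) < p := by exact_mod_cast hp
  calc _ ≤ ∑ r ∈ Finset.Icc 1 p, p * x * (1 / 2) ^ r :=
        Finset.sum_le_sum fun r hr => inner_term_le p hp x hx hpx r (Finset.mem_Icc.1 hr).1
    _ = p * x * (1 - (1 / 2) ^ p) := by rw [← Finset.mul_sum, sum_half_pow]
    _ < p * x := by
        have : (0 : ℝ) < (1 / 2) ^ p := by positivity
        nlinarith [mul_pos hp' hx]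

lemma sum_choose_pow (p : ℕ) (A : ℝ) :
    ∑ l ∈ Finset.Icc 1 p, (p.choose l : ℝ) * A ^ l = (1 + A) ^ p - 1 := by
  rw [add_comm, add_pow, Finset.sum_range_eq_add_Ico _ (by omega)]
  simp [Finset.Ico_add_one_right_eq_Icc, mul_comm]

lemma sum_choose_weighted_pow (p : ℕ) (hp : 1 ≤ p) (B : ℝ) :
    ∑ l ∈ Finset.Icc 1 p, (p.choose l : ℝ) * (((p - l : ℕ) : ℝ) / p) * B ^ l =
      (1 + B) ^ (p - 1) - 1 := by
  obtain ⟨n, rfl⟩ : ∃ n, p = n + 1 := ⟨p - 1, by omega⟩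
  have hterm : ∀ l, ((n + 1).choose l : ℝ) * (((n + 1 - l : ℕ) : ℝ) / (n + 1 : ℕ)) =
      (n.choose l : ℝ) := by
    intro l
    have hne : ((n + 1 : ℕ) : ℝ) ≠ 0 := by positivity
    rw [mul_div_assoc', div_eq_iff hne]
    exact_mod_cast (Nat.choose_mul_succ_eq n l).symm
  rw [Finset.sum_congr rfl fun l _ => by rw [hterm l], Finset.sum_Icc_succ_top (by omega),
    sum_choose_pow]
  simp

/-- Bernoulli's inequality in the homogeneous form `u^p + p x u^(p-1) ≤ (u + x)^p`. -/
lemma pow_add_ge (p : ℕ) (u x : ℝ) (hu : 0 ≤ u) (hx : 0 ≤ x) :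
    u ^ p + p * x * u ^ (p - 1) ≤ (u + x) ^ p := by
  rcases p with _ | n
  · simp
  induction n with
  | zero => simp
  | succ n ih =>
    simp only [Nat.add_sub_cancel] at ih ⊢
    have hpow : 0 ≤ u ^ n := by positivity
    calc _ ≤ (u + x) * (u ^ (n + 1) + (n + 1 : ℕ) * x * u ^ n) := by
          push_cast
          have : 0 ≤ (n + 1) * x ^ 2 * u ^ n := by positivity
          linear_combination this
      _ ≤ (u + x) * (u + x) ^ (n + 1) := by gcongr
      _ = _ := by ring

/-- Positivity of the constant `γ₂` from (5.122) in the backward Euler moment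
bound, for `0 < h ≤ 1/(p(a₁ - a₂))`. -/
theorem gamma2_pos (p : ℕ) (hp : 1 ≤ p) (a₁ a₂ : ℝ) (ha : a₂ < a₁) (ha₂ : 0 ≤ a₂)
    (h : ℝ) (hh : 0 < h) (hh2 : h ≤ 1 / (p * (a₁ - a₂))) :
    0 <
      ((1 + a₁ * h) ^ p)⁻¹ *
        (∑ l ∈ Finset.Icc 1 p, (p.choose l : ℝ) * h ^ (l - 1) *
          (a₁ ^ l - a₂ ^ l *
            (1 + (((p - l : ℕ) : ℝ) / p) *
              ∑ r ∈ Finset.Icc 1 p, ((2 * p).choose (2 * r) : ℝ) *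
                (Nat.doubleFactorial (2 * r - 1) : ℝ) * 4 ^ r *
                ((a₁ - a₂) / (5 * (4 * (p : ℝ) - 1))) ^ r * h ^ r))) -
      ((1 + a₁ * h) ^ p)⁻¹ *
        ∑ r ∈ Finset.Icc 1 p, ((2 * p).choose (2 * r) : ℝ) *
          (Nat.doubleFactorial (2 * r - 1) : ℝ) * 4 ^ r *
          ((a₁ - a₂) / (5 * (4 * (p : ℝ) - 1))) ^ r * h ^ (r - 1) := by
  have hp' : (0 : ℝ) < p := by exact_mod_cast hp
  have hd : 0 < a₁ - a₂ := sub_pos.2 ha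
  have hpx : p * ((a₁ - a₂) * h) ≤ 1 := by
    rw [le_div_iff₀ (by positivity)] at hh2
    linarith
  set S := ∑ r ∈ Finset.Icc 1 p, ((2 * p).choose (2 * r) : ℝ) *
    (Nat.doubleFactorial (2 * r - 1) : ℝ) * 4 ^ r *
    ((a₁ - a₂) / (5 * (4 * (p : ℝ) - 1))) ^ r * h ^ r with hS
  have hSlt : S < p * ((a₁ - a₂) * h) := by
    refine lt_of_eq_of_lt ?_ (inner_sum_lt p hp ((a₁ - a₂) * h) (by positivity) hpx)
    refine Finset.sum_congr rfl fun r _ => ?_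
    rw [show 4 * ((a₁ - a₂) * h) / (5 * (4 * (p : ℝ) - 1)) =
      4 * ((a₁ - a₂) / (5 * (4 * (p : ℝ) - 1))) * h by ring, mul_pow, mul_pow]
    ring
  -- Multiplying by `h` restores the missing power of `h` in both outer sums.
  have hpow : ∀ k ∈ Finset.Icc 1 p, h ^ k = h * h ^ (k - 1) := fun k hk => by
    rw [← pow_succ', Nat.sub_add_cancel (Finset.mem_Icc.1 hk).1]
  have hS' : h * ∑ r ∈ Finset.Icc 1 p, ((2 * p).choose (2 * r) : ℝ) *
      (Nat.doubleFactorial (2 * r - 1) : ℝ) * 4 ^ r *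
      ((a₁ - a₂) / (5 * (4 * (p : ℝ) - 1))) ^ r * h ^ (r - 1) = S := by
    rw [hS, Finset.mul_sum]
    refine Finset.sum_congr rfl fun r hr => ?_
    rw [hpow r hr]; ring
  have hmain : h * ∑ l ∈ Finset.Icc 1 p, (p.choose l : ℝ) * h ^ (l - 1) *
      (a₁ ^ l - a₂ ^ l * (1 + (((p - l : ℕ) : ℝ) / p) * S)) =
      ((1 + a₁ * h) ^ p - 1) - ((1 + a₂ * h) ^ p - 1) - S * ((1 + a₂ * h) ^ (p - 1) - 1) := by
    rw [← sum_choose_pow, ← sum_choose_pow, ← sum_choose_weighted_pow p hp, Finset.mul_sum,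
      Finset.mul_sum, ← Finset.sum_sub_distrib, ← Finset.sum_sub_distrib]
    refine Finset.sum_congr rfl fun l hl => ?_
    rw [mul_pow, mul_pow, hpow l hl]; ring
  have ha₁ : 0 < a₁ := ha₂.trans_lt ha
  have hbern := pow_add_ge p (1 + a₂ * h) ((a₁ - a₂) * h) (by positivity) (by positivity)
  rw [show 1 + a₂ * h + (a₁ - a₂) * h = 1 + a₁ * h by ring] at hbern
  have hB : 0 < (1 + a₂ * h) ^ (p - 1) := by positivity
  rw [← mul_sub]
  refine mul_pos (by positivity) (pos_of_mul_pos_right (a := h) ?_ hh.le)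
  rw [mul_sub, hmain, hS']
  nlinarith [mul_lt_mul_of_pos_right hSlt hB]
end
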